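/- Let 𝒜 be a class of weakly-archimedean linearly ordered FL_ew-algebras containing, for each n, a non-n-contractive algebra, P a PCP instance, and M an 𝒜-Kripke model over the frame W = {u, u₁, …, u_k}, R = {⟨u,u_i⟩ : 1 ≤ i ≤ k} ∪ {⟨u_i,u_j⟩ : 1 ≤ j < i ≤ k}, such that e(u,γ)=1 for all γ ∈ Γ_P, e(u_k, φ_P) < 1, and α_y is the common value of y at u₁,…,u_k. Then for every 1 ≤ j ≤ k, e(u_j, v) = α_y^{𝚟_{i₁}⋯𝚟_{i_j}} and e(u_j, w) = α_y^{𝚠_{i₁}⋯𝚠_{i_j}} (exponents being concatenations in base s), where i_n is the unique index in {1,…,m} such that e(u_n, v) = e(u_n, □v)^{s^{‖𝚟_{i_n}‖}}·α_y^{𝚟_{i_n}} and e(u_n, w) = e(u_n, □w)^{s^{‖𝚠_{i_n}‖}}·α_y^{𝚠_{i_n}}. Moreover, for every 1 ≤ j ≤ k, e(u_j, v) = e(u_j, w) if and only if 𝚟_{i₁}⋯𝚟_{i_j} = 𝚠_{i₁}⋯𝚠_{i_j}. -/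

import Mathlib

/-!
At every world `u_j` the second formula of `Γ_P` forces, because the algebra is a chain, one
disjunct to take the value `1`; this gives `e(u_j, v) = e(u_j, □v) ^ s^‖v_i‖ * α_y ^ v_i` and the
analogous equation for `w` with the same index `i`. Since `s^‖v_i‖ ≥ 1`, such an equation gives
`e(u_j, v) ≤ e(u_j, □v)`, so the values of `v` decrease along `u₁, …, u_k`. Hence `e(u₁, □v) = 1`
and `e(u_{j+1}, □v) = e(u_j, v)`, and an induction writes every value as a power of `α_y` whose
exponent is the concatenation of the chosen words.

Both uniqueness of the indices and the final equivalence require that powers of `α_y` determine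
their exponents. Let `V`, `W` be the exponents at `u_k`. If `α_y ^ (V + W + 1) = α_y ^ (V + W)`, then
`v·w → v·w·y`, and therefore `φ_P`, would have the value `1` at `u_k`. So the powers of `α_y` are
strictly decreasing up to `V + W + 1`, and all relevant exponents are at most `V + W`
(`eq_of_pow_eq`). Uniqueness of the index then reduces to the fact that `x` can be recovered from
the concatenation of `n` and `x` once `n` is known (`concat2_right_injective`).
-/

/-- An FL_ew-algebra: a bounded lattice with a commutative monoid structure whose unit is the
top element, together with a residuum `himp` satisfying the residuation law. -/
class FLew (α : Type) extends Lattice α, BoundedOrder α, CommMonoid α where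
  himp : α → α → α
  mul_le_iff_le_himp : ∀ {a b c : α}, a * b ≤ c ↔ a ≤ himp b c
  one_eq_top : (1 : α) = ⊤

namespace FLew

/-- The lattice order is linear. -/
def isChain (α : Type) [FLew α] : Prop := ∀ a b : α, a ≤ b ∨ b ≤ a

/-- Weakly archimedean: if `a ≤ bⁿ` for all `n` then `a * b = a`. -/
def weaklyArchimedean (α : Type) [FLew α] : Prop :=
  ∀ a b : α, (∀ n : ℕ, a ≤ b ^ n) → a * b = a

/-- `n`-contractive: `a^(n+1) = aⁿ` for every `a`. -/
def contractive (α : Type) [FLew α] (n : ℕ) : Prop :=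
  ∀ a : α, a ^ (n + 1) = a ^ n

end FLew

/-- Modal formulas over a set `V` of propositional variables. -/
inductive MFormula (V : Type) : Type
  | var : V → MFormula V
  | fZero : MFormula V
  | fOne : MFormula V
  | fAnd : MFormula V → MFormula V → MFormula V
  | fOr : MFormula V → MFormula V → MFormula V
  | fMul : MFormula V → MFormula V → MFormula V
  | fImp : MFormula V → MFormula V → MFormula V
  | fBox : MFormula V → MFormula V
  | fDia : MFormula V → MFormula V
  deriving DecidableEq

namespace MFormula

variable {V : Type}

def fNeg (φ : MFormula V) : MFormula V := .fImp φ .fZero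

def fIff (φ ψ : MFormula V) : MFormula V := .fMul (.fImp φ ψ) (.fImp ψ φ)

def fPow (φ : MFormula V) : ℕ → MFormula V
  | 0 => .fOne
  | n + 1 => .fMul (fPow φ n) φ

def bigOr : List (MFormula V) → MFormula V
  | [] => .fZero
  | φ :: l => .fOr φ (bigOr l)

def map {V' : Type} (f : V → V') : MFormula V → MFormula V'
  | .var x => .var (f x)
  | .fZero => .fZero
  | .fOne => .fOne
  | .fAnd φ ψ => .fAnd (map f φ) (map f ψ)
  | .fOr φ ψ => .fOr (map f φ) (map f ψ)
  | .fMul φ ψ => .fMul (map f φ) (map f ψ)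
  | .fImp φ ψ => .fImp (map f φ) (map f ψ)
  | .fBox φ => .fBox (map f φ)
  | .fDia φ => .fDia (map f φ)

end MFormula

/-- A (safe) Kripke model over an FL_ew-algebra `α`: the evaluation `e` is world-wise a
homomorphism on the propositional connectives and interprets `□`/`◇` as the infimum/supremum
of the values at the accessible worlds (which are required to exist: safety). -/
structure KModel (α : Type) [FLew α] (V : Type) where
  W : Type
  nonempty : Nonempty W
  R : W → W → Prop
  e : W → MFormula V → α
  e_zero : ∀ v, e v .fZero = ⊥
  e_one : ∀ v, e v .fOne = 1
  e_and : ∀ v φ ψ, e v (.fAnd φ ψ) = e v φ ⊓ e v ψ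
  e_or : ∀ v φ ψ, e v (.fOr φ ψ) = e v φ ⊔ e v ψ
  e_mul : ∀ v φ ψ, e v (.fMul φ ψ) = e v φ * e v ψ
  e_imp : ∀ v φ ψ, e v (.fImp φ ψ) = FLew.himp (e v φ) (e v ψ)
  e_box : ∀ v φ, IsGLB {a | ∃ w, R v w ∧ e w φ = a} (e v (.fBox φ))
  e_dia : ∀ v φ, IsLUB {a | ∃ w, R v w ∧ e w φ = a} (e v (.fDia φ))

namespace KModel

variable {α V : Type} [FLew α]

/-- The accessibility relation is transitive. -/
def IsTrans (M : KModel α V) : Prop := ∀ a b c : M.W, M.R a b → M.R b c → M.R a c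

/-- The model is finite. -/
def IsFinite (M : KModel α V) : Prop := Finite M.W

/-- The depth of world `w` is at most `k`: every `R`-chain starting at `w` has length `≤ k`. -/
def DepthLE (M : KModel α V) (w : M.W) (k : ℕ) : Prop :=
  ∀ (n : ℕ) (c : Fin (n + 1) → M.W), c 0 = w →
    (∀ i : Fin n, M.R (c i.castSucc) (c i.succ)) → n ≤ k

/-- World `w` has finite depth. -/
def FiniteDepth (M : KModel α V) (w : M.W) : Prop := ∃ k, M.DepthLE w k

end KModel

/-- Local consequence over the models (over the algebras `A i`) satisfying the class
condition `C`. -/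
def LocalConsequence {I : Type} (A : I → Type) [∀ i, FLew (A i)] {V : Type}
    (C : ∀ i, KModel (A i) V → Prop) (Γ : List (MFormula V)) (φ : MFormula V) : Prop :=
  ∀ (i : I) (M : KModel (A i) V), C i M → ∀ v : M.W,
    (∀ γ ∈ Γ, M.e v γ = 1) → M.e v φ = 1

/-- Number of digits of `y` in base `s` (a number always has at least one digit). -/
def numDigits (s y : ℕ) : ℕ := if y = 0 then 1 else (Nat.digits s y).length

/-- Concatenation of the numbers `x` and `y` in base `s`. -/
def concat2 (s x y : ℕ) : ℕ := x * s ^ numDigits s y + y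

/-- Concatenation of a list of numbers in base `s`. -/
def concatList (s : ℕ) (l : List ℕ) : ℕ := l.foldl (concat2 s) 0

/-- An instance of the Post Correspondence Problem: a list of pairs of numbers in base
`s ≥ 2`, without repeated pairs. -/
structure PCPInstance where
  s : ℕ
  hs : 2 ≤ s
  m : ℕ
  v : Fin m → ℕ
  w : Fin m → ℕ
  norep : ∀ i j : Fin m, i ≠ j → v i ≠ v j ∨ w i ≠ w j

/-- A solution of a PCP instance: a nonempty sequence of indices along which the
`v`-concatenation equals the `w`-concatenation. -/
def PCPInstance.HasSolution (P : PCPInstance) : Prop :=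
  ∃ l : List (Fin P.m), l ≠ [] ∧
    concatList P.s (l.map fun i => P.v i) = concatList P.s (l.map fun i => P.w i)

/-- The three variables `y`, `v`, `w` of the reduction. -/
def yv : MFormula (Fin 3) := .var 0
def vv : MFormula (Fin 3) := .var 1
def wv : MFormula (Fin 3) := .var 2

/-- Formula (1) of `Γ_P`: `□y ↔ ◇y`. -/
def gamma1 : MFormula (Fin 3) := MFormula.fIff (.fBox yv) (.fDia yv)

/-- Formula (2) of `Γ_P`. -/
def gamma2 (P : PCPInstance) : MFormula (Fin 3) :=
  .fBox (MFormula.bigOr ((List.finRange P.m).map fun i =>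
    .fAnd
      (MFormula.fIff vv (.fMul (MFormula.fPow (.fBox vv) (P.s ^ numDigits P.s (P.v i)))
        (MFormula.fPow yv (P.v i))))
      (MFormula.fIff wv (.fMul (MFormula.fPow (.fBox wv) (P.s ^ numDigits P.s (P.w i)))
        (MFormula.fPow yv (P.w i))))))

/-- Formula (3) of `Γ_P`: `□(□(v·w) → □v·□w)`. -/
def gamma3 : MFormula (Fin 3) :=
  .fBox (.fImp (.fBox (.fMul vv wv)) (.fMul (.fBox vv) (.fBox wv)))

def GammaP (P : PCPInstance) : List (MFormula (Fin 3)) := [gamma1, gamma2 P, gamma3]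

/-- `φ_P = (v↔w) → (y ∨ (v·w → v·w·y))`. -/
def phiP (_P : PCPInstance) : MFormula (Fin 3) :=
  .fImp (MFormula.fIff vv wv) (.fOr yv (.fImp (.fMul vv wv) (.fMul (.fMul vv wv) yv)))

/-! ### FL_ew-algebras -/

namespace FLew

variable {α : Type} [FLew α]

/-- Multiplication in an FL_ew-algebra is monotone, being residuated. -/
theorem mulLeftMono : MulLeftMono α := by
  refine ⟨fun a b c h => ?_⟩
  have h1 : b ≤ himp a (c * a) := h.trans (mul_le_iff_le_himp.1 le_rfl)
  have h2 := mul_le_iff_le_himp.2 h1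
  simpa [mul_comm] using h2

theorem le_one' (a : α) : a ≤ 1 := by
  rw [one_eq_top]; exact le_top

theorem mul_le_right' (a b : α) : a * b ≤ b := by
  have := mulLeftMono (α := α)
  simpa [mul_comm] using mul_le_mul_right (le_one' a) b

theorem mul_le_left' (a b : α) : a * b ≤ a := by
  rw [mul_comm]; exact mul_le_right' b a

theorem pow_le_self' (a : α) {n : ℕ} (hn : 1 ≤ n) : a ^ n ≤ a := by
  obtain ⟨m, rfl⟩ := Nat.exists_eq_add_of_le' hn
  rw [pow_succ]; exact mul_le_right' _ _

theorem himp_eq_one {a b : α} (h : a ≤ b) : himp a b = 1 := by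
  refine le_antisymm (le_one' _) (mul_le_iff_le_himp.1 ?_)
  simpa using h

theorem le_of_himp_eq_one {a b : α} (h : himp a b = 1) : a ≤ b := by
  have : (1 : α) ≤ himp a b := h.ge
  simpa using mul_le_iff_le_himp.2 this

theorem eq_of_iff_eq_one {a b : α} (h : himp a b * himp b a = 1) : a = b := by
  refine le_antisymm (le_of_himp_eq_one (le_antisymm (le_one' _) ?_))
    (le_of_himp_eq_one (le_antisymm (le_one' _) ?_))
  · rw [← h]; exact mul_le_left' _ _
  · rw [← h]; exact mul_le_right' _ _

/-- If the powers of `a` have not stabilised at the exponent `N`, then exponents up to `N` are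
determined by the corresponding powers. -/
theorem eq_of_pow_eq {a : α} {N : ℕ} (hN : a ^ (N + 1) ≠ a ^ N) {p q : ℕ} (hp : p ≤ N)
    (h : a ^ p = a ^ q) : p = q := by
  -- An equality of two distinct powers makes the powers constant from the smaller exponent on.
  have key : ∀ p q : ℕ, p ≤ N → p < q → a ^ p ≠ a ^ q := by
    intro p q hp hpq h
    apply hN
    have h1 : a ^ (p + 1) = a ^ p := by
      apply le_antisymm
      · rw [pow_succ]; exact mul_le_left' _ _
      · rw [h]
        obtain ⟨d, rfl⟩ := Nat.exists_eq_add_of_le hpq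
        rw [pow_add]; exact mul_le_left' _ _
    obtain ⟨d, rfl⟩ := Nat.exists_eq_add_of_le hp
    calc a ^ (p + d + 1) = a ^ (p + 1) * a ^ d := by rw [← pow_add]; congr 1; omega
      _ = a ^ (p + d) := by rw [h1, pow_add]
  rcases lt_trichotomy p q with hlt | heq | hgt
  · exact absurd h (key p q hp hlt)
  · exact heq
  · exact absurd h.symm (key q p (hgt.le.trans hp) hgt)

end FLew

/-! ### Concatenation in base `s` -/

theorem lt_pow_numDigits {s : ℕ} (hs : 2 ≤ s) (y : ℕ) : y < s ^ numDigits s y := by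
  unfold numDigits
  split_ifs with h
  · subst h; simp; omega
  · exact Nat.lt_base_pow_length_digits (by omega)

/-- Knowing the prefix `n`, the word `x` is determined by the concatenation. For `n = 0` the
concatenation is `x` itself; for `n > 0` a longer word gives a strictly larger concatenation. -/
theorem concat2_right_injective {s : ℕ} (hs : 2 ≤ s) (n : ℕ) {x y : ℕ}
    (h : concat2 s n x = concat2 s n y) : x = y := by
  unfold concat2 at h
  rcases Nat.eq_zero_or_pos n with rfl | hn
  · simpa using h
  have key : ∀ x y : ℕ, numDigits s x < numDigits s y →
      n * s ^ numDigits s x + x < n * s ^ numDigits s y + y := by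
    intro x y hlt
    have h1 := lt_pow_numDigits hs x
    have h2 : s ^ (numDigits s x + 1) ≤ s ^ numDigits s y :=
      Nat.pow_le_pow_right (by omega) hlt
    rw [pow_succ] at h2
    have h3 : n * (s ^ numDigits s x * s) ≤ n * s ^ numDigits s y := Nat.mul_le_mul_left n h2
    nlinarith [Nat.mul_le_mul_left (n * s ^ numDigits s x) hs,
      Nat.mul_le_mul_right (s ^ numDigits s x) hn]
  rcases lt_trichotomy (numDigits s x) (numDigits s y) with hlt | heq | hgt
  · have := key x y hlt; omega
  · rw [heq] at h; omega
  · have := key y x hgt; omega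

theorem le_concat2 {s : ℕ} (hs : 2 ≤ s) (n x : ℕ) : n ≤ concat2 s n x := by
  unfold concat2
  have : 1 ≤ s ^ numDigits s x := Nat.one_le_pow _ _ (by omega)
  nlinarith

/-- The concatenation of `f 1, …, f j` in base `s`. -/
def concatUpTo (s : ℕ) (f : ℕ → ℕ) (j : ℕ) : ℕ :=
  concatList s ((List.range j).map fun t => f (t + 1))

theorem concatUpTo_zero (s : ℕ) (f : ℕ → ℕ) : concatUpTo s f 0 = 0 := rfl

theorem concatUpTo_succ (s : ℕ) (f : ℕ → ℕ) (j : ℕ) :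
    concatUpTo s f (j + 1) = concat2 s (concatUpTo s f j) (f (j + 1)) := by
  simp [concatUpTo, concatList, List.range_succ]

theorem concatUpTo_mono {s : ℕ} (hs : 2 ≤ s) (f : ℕ → ℕ) : Monotone (concatUpTo s f) :=
  monotone_nat_of_le_succ fun j => by
    rw [concatUpTo_succ]; exact le_concat2 hs _ _

/-- Solution of the recursion for a word variable, with `x j` its value and `b j` the value of its
box at `u_j`. The empty concatenation is `0`, so the formula for the box also covers `b 1 = 1`. -/
theorem value_eq_pow {α : Type} [FLew α] {s k : ℕ} {a : α} {x b : ℕ → α} {f : ℕ → ℕ}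
    (hb1 : b 1 = 1) (hb : ∀ j, 1 ≤ j → j < k → b (j + 1) = x j)
    (hx : ∀ j, 1 ≤ j → j ≤ k → x j = b j ^ (s ^ numDigits s (f j)) * a ^ f j) :
    ∀ j, j < k → b (j + 1) = a ^ concatUpTo s f j ∧ x (j + 1) = a ^ concatUpTo s f (j + 1) := by
  intro j
  induction j with
  | zero =>
    intro hj
    refine ⟨by rw [concatUpTo_zero, pow_zero, hb1], ?_⟩
    rw [hx 1 le_rfl hj, hb1, one_pow, one_mul, concatUpTo_succ, concatUpTo_zero]
    simp [concat2]
  | succ j ih =>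
    intro hj
    have hbj : b (j + 1 + 1) = a ^ concatUpTo s f (j + 1) := by
      rw [hb (j + 1) (by omega) hj]; exact (ih (by omega)).2
    refine ⟨hbj, ?_⟩
    rw [hx (j + 1 + 1) (by omega) hj, hbj, ← pow_mul, ← pow_add, concatUpTo_succ s f (j + 1)]
    rfl

/-! ### Evaluation in Kripke models -/

namespace KModel

variable {α V : Type} [FLew α]

theorem e_pow (M : KModel α V) (u : M.W) (φ : MFormula V) (n : ℕ) :
    M.e u (MFormula.fPow φ n) = M.e u φ ^ n := by
  induction n with
  | zero => simp [MFormula.fPow, M.e_one]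
  | succ n ih => simp [MFormula.fPow, M.e_mul, ih, pow_succ]

theorem eq_of_e_iff (M : KModel α V) {u : M.W} {φ ψ : MFormula V}
    (h : M.e u (MFormula.fIff φ ψ) = 1) : M.e u φ = M.e u ψ := by
  rw [MFormula.fIff, M.e_mul, M.e_imp, M.e_imp] at h
  exact FLew.eq_of_iff_eq_one h

theorem e_of_box (M : KModel α V) {u u' : M.W} {φ : MFormula V}
    (h : M.e u (.fBox φ) = 1) (hR : M.R u u') : M.e u' φ = 1 := by
  refine le_antisymm (FLew.le_one' _) ?_
  rw [← h]
  exact (M.e_box u φ).1 ⟨u', hR, rfl⟩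

/-- In a nontrivial chain a true disjunction has a true disjunct. -/
theorem exists_of_e_bigOr (hc : FLew.isChain α) (h01 : (⊥ : α) ≠ 1) (M : KModel α V) {u : M.W}
    {l : List (MFormula V)} (h : M.e u (MFormula.bigOr l) = 1) : ∃ φ ∈ l, M.e u φ = 1 := by
  induction l with
  | nil => exact absurd ((M.e_zero u).symm.trans h) h01
  | cons φ l ih =>
    rw [MFormula.bigOr, M.e_or] at h
    rcases hc (M.e u φ) (M.e u (MFormula.bigOr l)) with h1 | h1
    · rw [sup_eq_right.2 h1] at h
      obtain ⟨ψ, hψ, h2⟩ := ih h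
      exact ⟨ψ, List.mem_cons_of_mem _ hψ, h2⟩
    · rw [sup_eq_left.2 h1] at h
      exact ⟨φ, List.mem_cons_self, h⟩

/-- The value of `□φ` along worlds `u₁, …, u_k` such that `u_j` sees exactly its
predecessors: if `φ` is always at most `□φ`, then the values of `φ` decrease, so
the infimum defining `□φ` is attained at the immediate predecessor. -/
theorem e_box_chain (M : KModel α V) {k : ℕ} (u : ℕ → M.W) (φ : MFormula V)
    (hu : ∀ j, 1 ≤ j → j ≤ k → ∀ b, M.R (u j) b ↔ ∃ i, 1 ≤ i ∧ i < j ∧ u i = b)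
    (hle : ∀ j, 1 ≤ j → j ≤ k → M.e (u j) φ ≤ M.e (u j) (.fBox φ)) (hk : 0 < k) :
    M.e (u 1) (.fBox φ) = 1 ∧
      ∀ j, 1 ≤ j → j < k → M.e (u (j + 1)) (.fBox φ) = M.e (u j) φ := by
  constructor
  · refine le_antisymm (FLew.le_one' _) ((M.e_box (u 1) φ).2 ?_)
    rintro _ ⟨b, hb, rfl⟩
    obtain ⟨i, h1, h2, -⟩ := (hu 1 le_rfl hk b).1 hb
    omega
  · intro j h1 h2
    refine le_antisymm ((M.e_box _ φ).1 ⟨u j, (hu (j + 1) (by omega) h2 _).2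
      ⟨j, h1, by omega, rfl⟩, rfl⟩) ((M.e_box _ φ).2 ?_)
    rintro _ ⟨b, hb, rfl⟩
    obtain ⟨i, h3, h4, rfl⟩ := (hu (j + 1) (by omega) h2 b).1 hb
    rcases (Nat.lt_succ_iff.1 h4).eq_or_lt with rfl | h5
    · exact le_rfl
    · exact (hle j h1 h2.le).trans
        ((M.e_box _ φ).1 ⟨u i, (hu j h1 h2.le _).2 ⟨i, h3, h5, rfl⟩, rfl⟩)

end KModel

/-! ### Matching indices and the values of `v` and `w` -/

/-- `i` is an index whose pair of words satisfies the two equations of the second formula of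
`Γ_P` at the world `u`, with `a` in place of the value of `y`. -/
def Matches {α : Type} [FLew α] (P : PCPInstance) (M : KModel α (Fin 3)) (a : α) (u : M.W)
    (i : Fin P.m) : Prop :=
  M.e u vv = M.e u (.fBox vv) ^ (P.s ^ numDigits P.s (P.v i)) * a ^ (P.v i) ∧
    M.e u wv = M.e u (.fBox wv) ^ (P.s ^ numDigits P.s (P.w i)) * a ^ (P.w i)

theorem exists_matches {α : Type} [FLew α] (hc : FLew.isChain α) (h01 : (⊥ : α) ≠ 1)
    (P : PCPInstance) (M : KModel α (Fin 3)) {r u : M.W} (hR : M.R r u)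
    (hΓ : M.e r (gamma2 P) = 1) : ∃ i, Matches P M (M.e u yv) u i := by
  obtain ⟨φ, hφ, h1⟩ := M.exists_of_e_bigOr hc h01 (M.e_of_box hΓ hR)
  obtain ⟨i, -, rfl⟩ := List.mem_map.1 hφ
  rw [M.e_and] at h1
  have hl := le_antisymm (FLew.le_one' _) (h1.ge.trans inf_le_left)
  have hr := le_antisymm (FLew.le_one' _) (h1.ge.trans inf_le_right)
  have hl' := M.eq_of_e_iff hl
  have hr' := M.eq_of_e_iff hr
  rw [M.e_mul, M.e_pow, M.e_pow] at hl' hr'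
  exact ⟨i, hl', hr'⟩

/-- Where `φ_P` fails, multiplication by `y` strictly decreases `v·w`. -/
theorem mul_ne_of_phiP {α : Type} [FLew α] {P : PCPInstance} {M : KModel α (Fin 3)} {u : M.W}
    (h : M.e u (phiP P) < 1) : M.e u vv * M.e u wv * M.e u yv ≠ M.e u vv * M.e u wv := by
  intro heq
  refine h.ne ?_
  rw [phiP, M.e_imp]
  apply FLew.himp_eq_one
  refine (FLew.le_one' _).trans ?_
  rw [M.e_or, M.e_imp, M.e_mul, M.e_mul, M.e_mul, heq, FLew.himp_eq_one le_rfl]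
  exact le_sup_right

/-- The characterization for worlds `u 1, …, u k` given by a function on `ℕ`, of which `u j` sees
exactly `u 1, …, u (j - 1)`; the values of `u` outside `1, …, k` are irrelevant. -/
theorem characterization_along {α : Type} [FLew α] (P : PCPInstance)
    {k : ℕ} (hk : 0 < k) (M : KModel α (Fin 3)) (u : ℕ → M.W)
    (hu : ∀ j, 1 ≤ j → j ≤ k → ∀ b, M.R (u j) b ↔ ∃ i, 1 ≤ i ∧ i < j ∧ u i = b)
    (a : α) (hy : M.e (u k) yv = a) (hex : ∀ n, 1 ≤ n → n ≤ k → ∃ i, Matches P M a (u n) i)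
    (hφ : M.e (u k) (phiP P) < 1) :
    ∃ idx : ℕ → Fin P.m,
      (∀ n, 1 ≤ n → n ≤ k → Matches P M a (u n) (idx n) ∧
        ∀ i', Matches P M a (u n) i' → i' = idx n) ∧
      (∀ j, 1 ≤ j → j ≤ k →
        M.e (u j) vv = a ^ concatUpTo P.s (fun n => P.v (idx n)) j ∧
        M.e (u j) wv = a ^ concatUpTo P.s (fun n => P.w (idx n)) j) ∧
      (∀ j, 1 ≤ j → j ≤ k → (M.e (u j) vv = M.e (u j) wv ↔
        concatUpTo P.s (fun n => P.v (idx n)) j = concatUpTo P.s (fun n => P.w (idx n)) j)) := by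
  obtain ⟨i0, -⟩ := hex 1 le_rfl hk
  have hex' : ∀ n, ∃ i, 1 ≤ n → n ≤ k → Matches P M a (u n) i := by
    intro n
    by_cases h : 1 ≤ n ∧ n ≤ k
    · obtain ⟨i, hi⟩ := hex n h.1 h.2
      exact ⟨i, fun _ _ => hi⟩
    · exact ⟨i0, fun h1 h2 => absurd ⟨h1, h2⟩ h⟩
  choose idx hidx using hex'
  have hpos : ∀ x : ℕ, 1 ≤ P.s ^ numDigits P.s x := fun x =>
    Nat.one_le_pow _ _ (by have := P.hs; omega)
  obtain ⟨hbv1, hbv⟩ := M.e_box_chain u vv hu (fun j h1 h2 => by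
    rw [(hidx j h1 h2).1]
    exact (FLew.mul_le_left' _ _).trans (FLew.pow_le_self' _ (hpos _))) hk
  obtain ⟨hbw1, hbw⟩ := M.e_box_chain u wv hu (fun j h1 h2 => by
    rw [(hidx j h1 h2).2]
    exact (FLew.mul_le_left' _ _).trans (FLew.pow_le_self' _ (hpos _))) hk
  have hv := value_eq_pow (s := P.s) (a := a) (x := fun j => M.e (u j) vv)
    (f := fun n => P.v (idx n)) hbv1 hbv (fun j h1 h2 => (hidx j h1 h2).1)
  have hw := value_eq_pow (s := P.s) (a := a) (x := fun j => M.e (u j) wv)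
    (f := fun n => P.w (idx n)) hbw1 hbw (fun j h1 h2 => (hidx j h1 h2).2)
  set Cv := concatUpTo P.s (fun n => P.v (idx n)) with hCv
  set Cw := concatUpTo P.s (fun n => P.w (idx n)) with hCw
  have hval : ∀ j, 1 ≤ j → j ≤ k → M.e (u j) vv = a ^ Cv j ∧ M.e (u j) wv = a ^ Cw j := by
    intro j h1 h2
    obtain ⟨j, rfl⟩ := Nat.exists_eq_add_of_le' h1
    exact ⟨(hv j h2).2, (hw j h2).2⟩
  have hN : a ^ (Cv k + Cw k + 1) ≠ a ^ (Cv k + Cw k) := by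
    have h := mul_ne_of_phiP hφ
    rw [(hval k hk le_rfl).1, (hval k hk le_rfl).2, hy] at h
    rwa [pow_succ, pow_add]
  have hCvk : ∀ j, j ≤ k → Cv j ≤ Cv k + Cw k := fun j h =>
    (concatUpTo_mono P.hs _ h).trans (Nat.le_add_right _ _)
  have hCwk : ∀ j, j ≤ k → Cw j ≤ Cv k + Cw k := fun j h =>
    (concatUpTo_mono P.hs _ h).trans (Nat.le_add_left _ _)
  refine ⟨idx, fun n h1 h2 => ⟨hidx n h1 h2, fun i' hi' => ?_⟩, hval, fun j h1 h2 => ?_⟩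
  · obtain ⟨n, rfl⟩ := Nat.exists_eq_add_of_le' h1
    by_contra hne
    obtain ⟨e1, e2⟩ := hi'
    rw [(hv n h2).1, (hval _ h1 h2).1, ← pow_mul, ← pow_add] at e1
    rw [(hw n h2).1, (hval _ h1 h2).2, ← pow_mul, ← pow_add] at e2
    have e1' := FLew.eq_of_pow_eq hN (hCvk _ h2) e1
    have e2' := FLew.eq_of_pow_eq hN (hCwk _ h2) e2
    rw [hCv, concatUpTo_succ] at e1'
    rw [hCw, concatUpTo_succ] at e2'
    rcases P.norep i' (idx (n + 1)) hne with h | h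
    · exact h (concat2_right_injective P.hs _ e1').symm
    · exact h (concat2_right_injective P.hs _ e2').symm
  · rw [(hval j h1 h2).1, (hval j h1 h2).2]
    exact ⟨FLew.eq_of_pow_eq hN (hCvk j h2), fun h => congrArg (a ^ ·) h⟩

/-- **Lemma.** In a model over the frame `W = {u, u₁, …, u_k}`,
`R = {⟨u,u_i⟩} ∪ {⟨u_i,u_j⟩ : j < i}` (via the equivalence `g`, with `u = g⁻¹ 0` and
`u_j = g⁻¹ j`) in which `Γ_P` holds at `u`, `φ_P` has value `< 1` at `u_k`, and `y` has
common value `α_y` at `u₁, …, u_k`: there is a choice of indices `i₁, i₂, …` (given by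
`idx`), each `i_n` being the unique index whose pair matches the defining equations at
`u_n`, such that `e(u_j, v) = α_y^{𝚟_{i₁}⋯𝚟_{i_j}}` and `e(u_j, w) = α_y^{𝚠_{i₁}⋯𝚠_{i_j}}`,
and moreover `e(u_j,v) = e(u_j,w)` iff `𝚟_{i₁}⋯𝚟_{i_j} = 𝚠_{i₁}⋯𝚠_{i_j}`. -/
theorem characterization_of_v_w_values
    {I : Type} (A : I → Type) [inst : ∀ i, FLew (A i)]
    (hchain : ∀ i, FLew.isChain (A i))
    (hwa : ∀ i, FLew.weaklyArchimedean (A i))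
    (hnc : ∀ n : ℕ, ∃ i, ¬ FLew.contractive (A i) n)
    (P : PCPInstance) (i : I) (k : ℕ) (hk : 0 < k)
    (M : KModel (A i) (Fin 3)) (g : M.W ≃ Fin (k + 1))
    (hR : ∀ a b : M.W, M.R a b ↔
      ((g a = 0 ∧ g b ≠ 0) ∨ (g b ≠ 0 ∧ (g b : ℕ) < (g a : ℕ))))
    (hΓ : ∀ γ ∈ GammaP P, M.e (g.symm 0) γ = 1)
    (hφ : M.e (g.symm ⟨k, Nat.lt_succ_self k⟩) (phiP P) < 1)
    (αy : A i) (hαy : ∀ j : Fin (k + 1), j ≠ 0 → M.e (g.symm j) yv = αy) :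
    ∃ idx : ℕ → Fin P.m,
      (∀ (n : ℕ) (h1 : 1 ≤ n) (h2 : n ≤ k),
        (M.e (g.symm ⟨n, Nat.lt_succ_of_le h2⟩) vv =
            M.e (g.symm ⟨n, Nat.lt_succ_of_le h2⟩) (.fBox vv) ^
              (P.s ^ numDigits P.s (P.v (idx n))) * αy ^ (P.v (idx n)) ∧
          M.e (g.symm ⟨n, Nat.lt_succ_of_le h2⟩) wv =
            M.e (g.symm ⟨n, Nat.lt_succ_of_le h2⟩) (.fBox wv) ^
              (P.s ^ numDigits P.s (P.w (idx n))) * αy ^ (P.w (idx n))) ∧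
        (∀ i' : Fin P.m,
          (M.e (g.symm ⟨n, Nat.lt_succ_of_le h2⟩) vv =
              M.e (g.symm ⟨n, Nat.lt_succ_of_le h2⟩) (.fBox vv) ^
                (P.s ^ numDigits P.s (P.v i')) * αy ^ (P.v i') ∧
            M.e (g.symm ⟨n, Nat.lt_succ_of_le h2⟩) wv =
              M.e (g.symm ⟨n, Nat.lt_succ_of_le h2⟩) (.fBox wv) ^
                (P.s ^ numDigits P.s (P.w i')) * αy ^ (P.w i')) → i' = idx n)) ∧
      (∀ (j : ℕ) (h1 : 1 ≤ j) (h2 : j ≤ k),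
        M.e (g.symm ⟨j, Nat.lt_succ_of_le h2⟩) vv =
            αy ^ concatList P.s ((List.range j).map fun t => P.v (idx (t + 1))) ∧
          M.e (g.symm ⟨j, Nat.lt_succ_of_le h2⟩) wv =
            αy ^ concatList P.s ((List.range j).map fun t => P.w (idx (t + 1)))) ∧
      (∀ (j : ℕ) (h1 : 1 ≤ j) (h2 : j ≤ k),
        (M.e (g.symm ⟨j, Nat.lt_succ_of_le h2⟩) vv =
            M.e (g.symm ⟨j, Nat.lt_succ_of_le h2⟩) wv ↔
          concatList P.s ((List.range j).map fun t => P.v (idx (t + 1))) =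
            concatList P.s ((List.range j).map fun t => P.w (idx (t + 1))))) := by
  -- Worlds enumerated by all natural numbers, so that no bound on the index has to be carried.
  let u : ℕ → M.W := fun n => g.symm (Fin.ofNat (k + 1) n)
  have hofNat : ∀ n (h : n ≤ k), Fin.ofNat (k + 1) n = ⟨n, Nat.lt_succ_of_le h⟩ := fun n h =>
    Fin.ext (Nat.mod_eq_of_lt (Nat.lt_succ_of_le h))
  have hun : ∀ n (h : n ≤ k), u n = g.symm ⟨n, Nat.lt_succ_of_le h⟩ := fun n h => by
    simp only [u, hofNat n h]
  have hgu : ∀ n, n ≤ k → ((g (u n) : Fin (k + 1)) : ℕ) = n := fun n h => by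
    rw [hun n h, Equiv.apply_symm_apply]
  have hne : ∀ n, 1 ≤ n → n ≤ k → g (u n) ≠ 0 := fun n h1 h2 h => by
    have h3 := hgu n h2
    rw [h] at h3
    simp at h3
    omega
  have hy : ∀ n, 1 ≤ n → n ≤ k → M.e (u n) yv = αy := fun n h1 h2 => by
    have := hαy (g (u n)) (hne n h1 h2)
    rwa [Equiv.symm_apply_apply] at this
  have hu : ∀ j, 1 ≤ j → j ≤ k → ∀ b, M.R (u j) b ↔ ∃ i, 1 ≤ i ∧ i < j ∧ u i = b := by
    intro j h1 h2 b
    rw [hR, hgu j h2]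
    constructor
    · rintro (⟨h, -⟩ | ⟨h, h3⟩)
      · exact absurd h (hne j h1 h2)
      · refine ⟨g b, Nat.one_le_iff_ne_zero.2 fun h4 => h (Fin.ext h4), h3, ?_⟩
        rw [hun _ (by omega), Fin.eta, Equiv.symm_apply_apply]
    · rintro ⟨i, h3, h4, rfl⟩
      exact Or.inr ⟨hne i h3 (by omega), by rw [hgu i (by omega)]; exact h4⟩
  have hφ' : M.e (u k) (phiP P) < 1 := by rw [hun k le_rfl]; exact hφ
  have h01 : (⊥ : A i) ≠ 1 := fun h => not_lt_bot (h ▸ hφ')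
  have hex : ∀ n, 1 ≤ n → n ≤ k → ∃ i, Matches P M αy (u n) i := by
    intro n h1 h2
    rw [← hy n h1 h2]
    refine exists_matches (hchain i) h01 P M ((hR (g.symm 0) (u n)).2 ?_)
      (hΓ _ (by simp [GammaP]))
    exact Or.inl ⟨Equiv.apply_symm_apply _ _, hne n h1 h2⟩
  obtain ⟨idx, H1, H2, H3⟩ := characterization_along P hk M u hu αy (hy k hk le_rfl) hex hφ'
  refine ⟨idx, fun n h1 h2 => ?_, fun j h1 h2 => ?_, fun j h1 h2 => ?_⟩
  · rw [← hun n h2]; exact H1 n h1 h2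
  · rw [← hun j h2]; exact H2 j h1 h2
  · rw [← hun j h2]; exact H3 j h1 h2
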